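/- Let N ≥ 1, and let R(x) = Σ_{k=0}^{d} R_k x^k and D(x) = Σ_{k=0}^{e} D_k x^k be complex polynomials with R_d ≠ 0, D monic, e = deg D < d = deg R, and R and D coprime. Let L ⊆ P_N be the ℂ-linear span of the rational loop-equation polynomials Q_μ over all n ≥ 1 and all tuples μ ∈ ℤ_{≥0}^n, and let L^⊥ be the annihilator of L in the dual space P_N^*. Then dim L^⊥ = binom(N+d−1, N) = (N+d−1)!/(N!·(d−1)!). -/

import Mathlib

/-!
With `d = deg R`, the subspace `L` has an explicit complement in the symmetric polynomials, namely
the space `C` of those whose exponents in each variable are all less than `d`. Since `C` has a basis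
indexed by multisets of `N` exponents in `{0, …, d - 1}`, the quotient by `L`, and hence the
annihilator of `L`, has dimension `binom(N + d - 1, N)`.

Put `Phi = ∏_{i ≠ j} (x_i - x_j)` and `∇_b u = R(x_b) u - ∂_b (D(x_b) u)`. The loop equations are
divergences: `Phi * Q_{m, μ} = ∑_b ∇_b (Phi g_b)` for the field `g_b = x_b^m p_μ` (`Dv_Qrat`). For a
field `g` of degree `n - d`, subject to a divisibility condition that equivariant fields satisfy,
the divergence divided by `Phi` is `R_d ∑_b x_b^d g_b` plus terms of degree less than `n`, because
`deg D < d` (`exists_Dv`). Coprimality of `R` and `D` plays no role.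

*`L + C` is everything.* By induction on the degree, modulo `L + C` every product `p_k f` with
`k ≥ d` and `f` symmetric is zero, being the leading part of an element of `L`. Multiplying a
symmetrized monomial by `p_k` then expresses any symmetrized monomial with an exponent `≥ d` through
ones involving fewer variables (`orb_mem`, `orb_mem_sup`).

*`L ∩ C = 0`.* Let `Phi f = ∑_b ∇_b (Phi g_b)` with `g` equivariant and `f` in `C`. The top degree
part of `g` satisfies `∑_b x_b^d g_b = 0`: no cancellation against `f` can occur, as every monomial
of this sum is divisible by some `x_b^d`. As `x_1^d, …, x_N^d` is a regular sequence, this part is a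
Koszul boundary `∑_b x_b^d h_{ab}` with `h` antisymmetric (`kos_boundary`). The field whose `a`-th
component is `R_d⁻¹` times the divergence of `h_{a·}` over `Phi` has the same top degree part, and
its own divergence vanishes, since `h` is antisymmetric and the `∇_b` commute. Subtracting it lowers
the degree of `g`, and eventually `g = 0`, so `f = 0` (`eq_zero_of_Dv`).
-/

set_option synthInstance.maxHeartbeats 1000000
set_option maxHeartbeats 1000000
open MvPolynomial Finset

/-- The space `P_N` of symmetric polynomials in `N` variables over `ℂ`. -/
abbrev SymPoly (N : ℕ) : Type := MvPolynomial.symmetricSubalgebra (Fin N) ℂ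

/-- The `k`-th power sum `p_k = ∑ x_i^k` as an element of `P_N`. -/
noncomputable def pPow (N k : ℕ) : SymPoly N :=
  ⟨MvPolynomial.psum (Fin N) ℂ k,
    (MvPolynomial.mem_symmetricSubalgebra _).2 (MvPolynomial.psum_isSymmetric _ _ k)⟩

/-- `p_μ = p_{μ₁} ⋯ p_{μ_n}` for a tuple `μ` of nonnegative integers (given as a list). -/
noncomputable def pProd (N : ℕ) (μ : List ℕ) : SymPoly N :=
  (μ.map (pPow N)).prod


/-- `∑_i P(x_i) x_i^m` as a multivariate polynomial. -/
noncomputable def pRpoly (N : ℕ) (P : Polynomial ℂ) (m : ℕ) : MvPolynomial (Fin N) ℂ :=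
  ∑ i : Fin N, Polynomial.aeval (MvPolynomial.X i) P * MvPolynomial.X i ^ m

lemma pRpoly_isSymmetric (N : ℕ) (P : Polynomial ℂ) (m : ℕ) :
    (pRpoly N P m).IsSymmetric := by
  intro e
  unfold pRpoly
  rw [map_sum,
    ← Equiv.sum_comp e
      (fun i => Polynomial.aeval (MvPolynomial.X i) P * MvPolynomial.X i ^ m)]
  refine Finset.sum_congr rfl fun i _ => ?_
  rw [map_mul, map_pow, MvPolynomial.rename_X, ← Polynomial.aeval_algHom_apply,
    MvPolynomial.rename_X]

/-- `∑_i P(x_i) x_i^m` as an element of `P_N`. -/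
noncomputable def pRS (N : ℕ) (P : Polynomial ℂ) (m : ℕ) : SymPoly N :=
  ⟨pRpoly N P m,
    (MvPolynomial.mem_symmetricSubalgebra _).2 (pRpoly_isSymmetric N P m)⟩

/-- The rational loop-equation polynomial `Q_μ ∈ P_N`, for `μ = μ₁ :: μs`. -/
noncomputable def Qrat (N : ℕ) (R D : Polynomial ℂ) (μ₁ : ℕ) (μs : List ℕ) :
    SymPoly N :=
  pRS N R μ₁ * pProd N μs
  - (∑ k ∈ Finset.range (D.natDegree + 1), D.coeff k •
      ∑ j ∈ Finset.range (k + μ₁), pPow N j * pPow N (k + μ₁ - 1 - j) * pProd N μs)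
  - (∑ i : Fin μs.length, (μs.get i : ℂ) •
      (pRS N D (μ₁ + μs.get i - 1) * pProd N (μs.eraseIdx i)))

/-- The rational loop-equation subspace `L ⊆ P_N`. -/
noncomputable def Lrat (N : ℕ) (R D : Polynomial ℂ) : Submodule ℂ (SymPoly N) :=
  Submodule.span ℂ {q | ∃ μ₁ μs, q = Qrat N R D μ₁ μs}


namespace LoopEq

variable {N : ℕ}

/-! ### The weight and the twisted divergence -/

/-- The weight `∏_{i ≠ j} (x_i - x_j)` over ordered pairs, that is `Δ²` up to sign. -/
noncomputable def Phi (N : ℕ) : MvPolynomial (Fin N) ℂ :=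
  ∏ p ∈ (univ : Finset (Fin N)).offDiag, (X p.1 - X p.2)

lemma ell_ne_zero {b c : Fin N} (h : b ≠ c) : (X b - X c : MvPolynomial (Fin N) ℂ) ≠ 0 :=
  sub_ne_zero.2 fun e => h (X_injective e)

lemma Phi_ne_zero : Phi N ≠ 0 := by
  refine Finset.prod_ne_zero_iff.2 fun p hp => ell_ne_zero ?_
  simpa using hp

lemma rename_Phi (σ : Equiv.Perm (Fin N)) : rename σ (Phi N) = Phi N := by
  unfold Phi
  rw [map_prod]
  refine Finset.prod_bij (fun p _ => (σ p.1, σ p.2)) ?_ ?_ ?_ ?_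
  · intro p hp; simpa using hp
  · rintro ⟨a, b⟩ _ ⟨c, e⟩ _ h; simpa using h
  · rintro ⟨a, b⟩ hp
    exact ⟨(σ.symm a, σ.symm b), by simpa using hp, by simp⟩
  · intro p _; simp

/-- The twisted derivative `u ↦ R(x_b) u - ∂_b (D(x_b) u)`, which is `-e^V ∂_b (D(x_b) e^{-V} u)`
for a potential with `V' = R / D`. -/
noncomputable def nab (R D : Polynomial ℂ) (b : Fin N) :
    MvPolynomial (Fin N) ℂ →ₗ[ℂ] MvPolynomial (Fin N) ℂ :=
  LinearMap.mulLeft ℂ (Polynomial.aeval (X b) R) -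
    (pderiv b).toLinearMap ∘ₗ LinearMap.mulLeft ℂ (Polynomial.aeval (X b) D)

lemma nab_apply (R D : Polynomial ℂ) (b : Fin N) (u : MvPolynomial (Fin N) ℂ) :
    nab R D b u = Polynomial.aeval (X b) R * u - pderiv b (Polynomial.aeval (X b) D * u) := rfl

lemma pderiv_aeval (P : Polynomial ℂ) (a b : Fin N) :
    pderiv a (Polynomial.aeval (X b : MvPolynomial (Fin N) ℂ) P)
      = if a = b then Polynomial.aeval (X b) (Polynomial.derivative P) else 0 := by
  rw [Derivation.map_aeval, pderiv_X]
  by_cases h : a = b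
  · subst h; simp
  · simp [h, Ne.symm h]

lemma pderiv_comm (a b : Fin N) (u : MvPolynomial (Fin N) ℂ) :
    pderiv a (pderiv b u) = pderiv b (pderiv a u) := by
  have : ⁅(pderiv a : Derivation ℂ (MvPolynomial (Fin N) ℂ) (MvPolynomial (Fin N) ℂ)), pderiv b⁆ =
      (0 : Derivation ℂ (MvPolynomial (Fin N) ℂ) (MvPolynomial (Fin N) ℂ)) := by
    refine MvPolynomial.derivation_ext fun i => ?_
    rw [Derivation.commutator_apply, pderiv_X, pderiv_X]
    simp only [Pi.single_apply]
    split_ifs <;> simp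
  have h := congrArg
    (fun d : Derivation ℂ (MvPolynomial (Fin N) ℂ) (MvPolynomial (Fin N) ℂ) => d u) this
  simp only [Derivation.commutator_apply] at h
  exact sub_eq_zero.1 h

lemma nab_comm (R D : Polynomial ℂ) (a b : Fin N) (u : MvPolynomial (Fin N) ℂ) :
    nab R D a (nab R D b u) = nab R D b (nab R D a u) := by
  by_cases h : a = b
  · rw [h]
  · simp only [nab_apply, map_sub, Derivation.leibniz, pderiv_aeval, h, Ne.symm h,
      smul_eq_mul, if_false, if_true, map_add, mul_add, pderiv_comm a b]
    ring

lemma rename_aeval (P : Polynomial ℂ) (σ : Equiv.Perm (Fin N)) (b : Fin N) :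
    rename σ (Polynomial.aeval (X b : MvPolynomial (Fin N) ℂ) P)
      = Polynomial.aeval (X (σ b)) P := by
  rw [← Polynomial.aeval_algHom_apply, rename_X]

lemma rename_nab (R D : Polynomial ℂ) (σ : Equiv.Perm (Fin N)) (b : Fin N)
    (u : MvPolynomial (Fin N) ℂ) :
    rename σ (nab R D b u) = nab R D (σ b) (rename σ u) := by
  simp only [nab_apply, map_sub, map_mul, rename_aeval, ← pderiv_rename σ.injective]

/-- The twisted divergence of the field `g`, with respect to the weight `Phi`. -/
noncomputable def Dv (R D : Polynomial ℂ) (g : Fin N → MvPolynomial (Fin N) ℂ) :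
    MvPolynomial (Fin N) ℂ := ∑ b, nab R D b (Phi N * g b)

lemma leibniz_prod {ι : Type*} [DecidableEq ι] (t : Finset ι) (f : ι → MvPolynomial (Fin N) ℂ)
    (b : Fin N) :
    pderiv b (∏ i ∈ t, f i) = ∑ i ∈ t, (∏ j ∈ t.erase i, f j) * pderiv b (f i) := by
  induction t using Finset.induction_on with
  | empty => simp
  | insert a t ha ih =>
    rw [Finset.prod_insert ha, Derivation.leibniz, Finset.sum_insert ha, Finset.erase_insert ha, ih,
      add_comm, smul_eq_mul, smul_eq_mul, Finset.mul_sum]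
    congr 1
    refine Finset.sum_congr rfl fun i hi => ?_
    rw [Finset.erase_insert_of_ne (by rintro rfl; exact ha hi),
      Finset.prod_insert (fun h => ha (Finset.mem_of_mem_erase h)), mul_assoc]

/-- The logarithmic derivative of the weight: if `q b c = (w b - w c) / (x_b - x_c)`, then
`∑ w_b ∂_b Phi = Phi ∑_{b ≠ c} q b c`. -/
lemma sum_mul_pderiv_Phi (w : Fin N → MvPolynomial (Fin N) ℂ)
    (q : Fin N → Fin N → MvPolynomial (Fin N) ℂ)
    (hq : ∀ b c, b ≠ c → (X b - X c) * q b c = w b - w c) :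
    ∑ b, w b * pderiv b (Phi N) = Phi N * ∑ p ∈ (univ : Finset (Fin N)).offDiag, q p.1 p.2 := by
  classical
  have key : ∀ b, pderiv b (Phi N) = ∑ p ∈ (univ : Finset (Fin N)).offDiag,
      (∏ r ∈ (univ : Finset (Fin N)).offDiag.erase p, (X r.1 - X r.2)) *
        ((if p.1 = b then 1 else 0) - (if p.2 = b then 1 else 0)) := by
    intro b
    unfold Phi
    rw [leibniz_prod]
    refine Finset.sum_congr rfl fun p _ => ?_
    simp [pderiv_X, Pi.single_apply, eq_comm]
  simp_rw [key, Finset.mul_sum]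
  rw [Finset.sum_comm]
  refine Finset.sum_congr rfl fun p hp => ?_
  have h1 : Phi N = (X p.1 - X p.2) *
      ∏ r ∈ (univ : Finset (Fin N)).offDiag.erase p, (X r.1 - X r.2) :=
    (Finset.mul_prod_erase _ _ hp).symm
  rw [h1, mul_right_comm, hq _ _ (by simpa using hp)]
  simp only [mul_sub, Finset.sum_sub_distrib, mul_ite, mul_one, mul_zero, Finset.sum_ite_eq,
    Finset.mem_univ, if_true]
  ring

/-- The explicit divergence, with the division by `Phi` carried out. -/
lemma Dv_eq (R D : Polynomial ℂ) (g : Fin N → MvPolynomial (Fin N) ℂ)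
    (q : Fin N → Fin N → MvPolynomial (Fin N) ℂ)
    (hq : ∀ b c, b ≠ c → (X b - X c) * q b c =
      Polynomial.aeval (X b) D * g b - Polynomial.aeval (X c) D * g c) :
    Dv R D g = Phi N * (∑ b, Polynomial.aeval (X b) R * g b
      - ∑ b, pderiv b (Polynomial.aeval (X b) D * g b)
      - ∑ p ∈ (univ : Finset (Fin N)).offDiag, q p.1 p.2) := by
  rw [mul_sub, ← sum_mul_pderiv_Phi _ q hq, mul_sub, Finset.mul_sum, Finset.mul_sum,
    ← Finset.sum_sub_distrib, ← Finset.sum_sub_distrib]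
  refine Finset.sum_congr rfl fun b _ => ?_
  rw [nab_apply, mul_left_comm _ (Phi N) (g b), mul_left_comm _ (Phi N) (g b),
    Derivation.leibniz (pderiv b) (Phi N)]
  simp only [smul_eq_mul]
  ring

/-! ### Degree bounds -/

/-- Every monomial of `p` has degree at most `n - r`, the subtraction being that of integers: for
`n < r` the condition says `p = 0`. -/
def Bd (r n : ℕ) (p : MvPolynomial (Fin N) ℂ) : Prop :=
  ∀ s, coeff s p ≠ 0 → s.degree + r ≤ n

lemma Bd.add {r n : ℕ} {p q : MvPolynomial (Fin N) ℂ} (hp : Bd r n p) (hq : Bd r n q) :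
    Bd r n (p + q) := by
  intro s hs
  by_cases h : coeff s p = 0
  · exact hq s (by simpa [h] using hs)
  · exact hp s h

lemma Bd.neg {r n : ℕ} {p : MvPolynomial (Fin N) ℂ} (hp : Bd r n p) : Bd r n (-p) := by
  intro s hs
  exact hp s (by simpa using hs)

lemma Bd.sub {r n : ℕ} {p q : MvPolynomial (Fin N) ℂ} (hp : Bd r n p) (hq : Bd r n q) :
    Bd r n (p - q) := by
  rw [sub_eq_add_neg]; exact hp.add hq.neg

lemma Bd.zero (r n : ℕ) : Bd r n (0 : MvPolynomial (Fin N) ℂ) := by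
  intro s hs; simp at hs

lemma Bd.sum {ι : Type*} {r n : ℕ} (t : Finset ι) {p : ι → MvPolynomial (Fin N) ℂ}
    (hp : ∀ i ∈ t, Bd r n (p i)) : Bd r n (∑ i ∈ t, p i) :=
  Finset.sum_induction p (Bd r n) (fun _ _ => Bd.add) (Bd.zero r n) hp

lemma Bd.smul {r n : ℕ} {p : MvPolynomial (Fin N) ℂ} (c : ℂ) (hp : Bd r n p) :
    Bd r n (c • p) := by
  intro s hs
  refine hp s fun h => hs ?_
  simp [h]

lemma Bd.mul {r n r' n' : ℕ} {p q : MvPolynomial (Fin N) ℂ} (hp : Bd r n p) (hq : Bd r' n' q) :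
    Bd (r + r') (n + n') (p * q) := by
  classical
  intro s hs
  rw [coeff_mul] at hs
  obtain ⟨x, hx, h⟩ := Finset.exists_ne_zero_of_sum_ne_zero hs
  have h1 := hp _ (left_ne_zero_of_mul h)
  have h2 := hq _ (right_ne_zero_of_mul h)
  rw [← Finset.HasAntidiagonal.mem_antidiagonal.1 hx, map_add]
  omega

lemma Bd.shift {r n k : ℕ} {p : MvPolynomial (Fin N) ℂ} (hp : Bd (r + k) (n + k) p) :
    Bd r n p := by
  intro s hs
  have := hp s hs
  omega

lemma Bd.pderiv {r n : ℕ} {p : MvPolynomial (Fin N) ℂ} (b : Fin N) (hp : Bd r n p) :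
    Bd r n (pderiv b p) := by
  intro s hs
  rw [coeff_pderiv] at hs
  have := hp _ (left_ne_zero_of_mul hs)
  rw [map_add, Finsupp.degree_single] at this
  omega

lemma Bd.of_totalDegree {r n : ℕ} {p : MvPolynomial (Fin N) ℂ} (h : p.totalDegree + r ≤ n) :
    Bd r n p := by
  intro s hs
  have := le_totalDegree (mem_support_iff.2 hs)
  have e : (s.sum fun _ e => e) = s.degree := rfl
  omega

lemma Bd.totalDegree {r n : ℕ} {p : MvPolynomial (Fin N) ℂ} (hp : Bd r n p) (h0 : p ≠ 0) :
    p.totalDegree + r ≤ n := by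
  obtain ⟨s, hs, e⟩ := Finset.exists_mem_eq_sup p.support (support_nonempty.2 h0)
    (fun s => s.sum fun _ e => e)
  have : p.totalDegree = s.degree := e
  rw [this]
  exact hp s (mem_support_iff.1 hs)

lemma Bd.of_ell_mul {r n : ℕ} {b c : Fin N} (h : b ≠ c) {q : MvPolynomial (Fin N) ℂ}
    (hq : Bd r n ((X b - X c) * q)) : Bd r n q := by
  by_cases h0 : q = 0
  · rw [h0]; exact Bd.zero _ _
  · have := hq.totalDegree (mul_ne_zero (ell_ne_zero h) h0)
    rw [totalDegree_mul_of_isDomain (ell_ne_zero h) h0] at this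
    exact Bd.of_totalDegree (by omega)

lemma Bd.X_pow {r n : ℕ} (b : Fin N) (k : ℕ) (hk : k + r ≤ n) :
    Bd r n ((X b : MvPolynomial (Fin N) ℂ) ^ k) := by
  refine Bd.of_totalDegree ?_
  rwa [totalDegree_X_pow]

lemma Bd.aeval {n : ℕ} (P : Polynomial ℂ) (hP : P.degree < n) (b : Fin N) :
    Bd 1 n (Polynomial.aeval (X b : MvPolynomial (Fin N) ℂ) P) := by
  rw [Polynomial.aeval_eq_sum_range]
  refine Bd.sum _ fun k _ => ?_
  by_cases h : P.coeff k = 0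
  · rw [h, zero_smul]; exact Bd.zero _ _
  · refine Bd.smul _ (Bd.X_pow b k ?_)
    have := (Polynomial.le_degree_of_ne_zero h).trans_lt hP
    exact_mod_cast this

/-- A field whose differences `D(x_b) g_b - D(x_c) g_c` are divisible by `x_b - x_c` has a
divergence divisible by `Phi`. If `g` has degree at most `n - d`, the quotient is
`R_d ∑ x_b^d g_b` up to terms of degree less than `n`. -/
lemma exists_Dv (R D : Polynomial ℂ) (hdeg : D.natDegree < R.natDegree) (n : ℕ)
    (g : Fin N → MvPolynomial (Fin N) ℂ)
    (hg : ∀ b c, b ≠ c → (X b - X c : MvPolynomial (Fin N) ℂ) ∣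
      Polynomial.aeval (X b) D * g b - Polynomial.aeval (X c) D * g c)
    (hb : ∀ b, Bd R.natDegree n (g b)) :
    ∃ k, Phi N * k = Dv R D g ∧
      Bd 1 n (k - R.leadingCoeff • ∑ b, X b ^ R.natDegree * g b) := by
  have hD : ∀ b, Bd 1 n (Polynomial.aeval (X b) D * g b) := fun b =>
    Bd.shift (k := R.natDegree) (by
      have h1 := Bd.aeval (n := R.natDegree) D
        (Polynomial.degree_le_natDegree.trans_lt (by exact_mod_cast hdeg)) b
      have := h1.mul (hb b)
      rwa [add_comm R.natDegree n] at this)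
  have hRl : ∀ b, Bd 1 n (Polynomial.aeval (X b) R.eraseLead * g b) := fun b =>
    Bd.shift (k := R.natDegree) (by
      have h0 : R ≠ 0 := by rintro rfl; simp at hdeg
      have h1 := Bd.aeval (n := R.natDegree) R.eraseLead
        (by rw [← Polynomial.degree_eq_natDegree h0]; exact Polynomial.degree_eraseLead_lt h0) b
      have := h1.mul (hb b)
      rwa [add_comm R.natDegree n] at this)
  choose! q hq using hg
  refine ⟨_, (Dv_eq R D g q fun b c h => (hq b c h).symm).symm, ?_⟩
  have e : ∑ b, Polynomial.aeval (X b) R * g b = R.leadingCoeff • ∑ b, X b ^ R.natDegree * g b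
      + ∑ b, Polynomial.aeval (X b) R.eraseLead * g b := by
    rw [Finset.smul_sum, ← Finset.sum_add_distrib]
    refine Finset.sum_congr rfl fun b _ => ?_
    conv_lhs => rw [← R.eraseLead_add_monomial_natDegree_leadingCoeff]
    rw [map_add, Polynomial.aeval_monomial, add_mul, add_comm, mul_assoc, Algebra.smul_def]
  rw [e, add_sub_assoc, add_sub_assoc, add_sub_cancel_left, sub_sub]
  refine (Bd.sum _ fun b _ => hRl b).sub ((Bd.sum _ fun b _ => (hD b).pderiv b).add
    (Bd.sum _ fun p hp => ?_))
  have hp' : p.1 ≠ p.2 := by simpa using hp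
  refine Bd.of_ell_mul hp' ?_
  rw [← hq _ _ hp']
  exact (hD _).sub (hD _)

/-! ### Equivariant fields and the Koszul homotopy -/

/-- An `S_N`-equivariant polynomial vector field. -/
def Equi (g : Fin N → MvPolynomial (Fin N) ℂ) : Prop :=
  ∀ (σ : Equiv.Perm (Fin N)) (a : Fin N), rename σ (g a) = g (σ a)

lemma ell_dvd_sub_rename (b c : Fin N) (p : MvPolynomial (Fin N) ℂ) :
    (X b - X c : MvPolynomial (Fin N) ℂ) ∣ p - rename (Equiv.swap b c) p := by
  rw [← Ideal.mem_span_singleton, ← Ideal.Quotient.eq]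
  set I : Ideal (MvPolynomial (Fin N) ℂ) := Ideal.span {X b - X c}
  have h : Ideal.Quotient.mkₐ ℂ I = (Ideal.Quotient.mkₐ ℂ I).comp (rename (Equiv.swap b c)) := by
    have hbc : Ideal.Quotient.mk I (X b) = Ideal.Quotient.mk I (X c) :=
      Ideal.Quotient.eq.2 (Ideal.mem_span_singleton_self _)
    refine MvPolynomial.algHom_ext fun i => ?_
    simp only [AlgHom.comp_apply, rename_X, Ideal.Quotient.mkₐ_eq_mk]
    by_cases h1 : i = b
    · subst h1; rw [Equiv.swap_apply_left, hbc]
    by_cases h2 : i = c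
    · subst h2; rw [Equiv.swap_apply_right, hbc]
    rw [Equiv.swap_apply_of_ne_of_ne h1 h2]
  exact congrArg (fun φ : _ →ₐ[ℂ] _ => φ p) h

lemma Equi.dvd {g : Fin N → MvPolynomial (Fin N) ℂ} (hg : Equi g) (D : Polynomial ℂ)
    (b c : Fin N) : (X b - X c : MvPolynomial (Fin N) ℂ) ∣
      Polynomial.aeval (X b) D * g b - Polynomial.aeval (X c) D * g c := by
  have := ell_dvd_sub_rename b c (Polynomial.aeval (X b) D * g b)
  rwa [map_mul, rename_aeval, hg, Equiv.swap_apply_left] at this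

/-- Coefficientwise multiplication by `w`. -/
noncomputable def wt (w : (Fin N →₀ ℕ) → ℂ) (p : MvPolynomial (Fin N) ℂ) :
    MvPolynomial (Fin N) ℂ := ∑ s ∈ p.support, monomial s (w s * coeff s p)

lemma coeff_wt (w : (Fin N →₀ ℕ) → ℂ) (p : MvPolynomial (Fin N) ℂ) (t : Fin N →₀ ℕ) :
    coeff t (wt w p) = w t * coeff t p := by
  unfold wt
  simp only [coeff_sum, coeff_monomial, Finset.sum_ite_eq']
  split_ifs with h
  · rfl
  · rw [notMem_support_iff.1 h, mul_zero]

/-- The number of variables occurring in the monomial `x^u` with exponent at least `d`. -/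
def big (d : ℕ) (u : Fin N →₀ ℕ) : ℕ := (univ.filter fun i => d ≤ u i).card

lemma big_mapDomain (d : ℕ) (σ : Equiv.Perm (Fin N)) (u : Fin N →₀ ℕ) :
    big d (u.mapDomain σ) = big d u := by
  refine (Finset.card_bij (fun i _ => σ i) ?_ ?_ ?_).symm
  · intro i hi
    simpa [Finsupp.mapDomain_apply σ.injective] using hi
  · intro i _ j _ h; exact σ.injective h
  · intro i hi
    refine ⟨σ.symm i, ?_, by simp⟩
    have : u.mapDomain σ (σ (σ.symm i)) = u (σ.symm i) := Finsupp.mapDomain_apply σ.injective _ _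
    rw [Equiv.apply_symm_apply] at this
    rw [Finset.mem_filter] at hi ⊢
    exact ⟨Finset.mem_univ _, this ▸ hi.2⟩

/-- The Koszul homotopy for the regular sequence `x_1^d, …, x_N^d`, restricted to degree `n` of `g`:
a chain `g` with `∑ x_a^d g_a = 0` in degree `n` is the boundary of `kos d n g` there. The weight
`1 / big` normalizes by the number of variables that contribute to the boundary. -/
noncomputable def kos (d n : ℕ) (g : Fin N → MvPolynomial (Fin N) ℂ) (a b : Fin N) :
    MvPolynomial (Fin N) ℂ :=
  wt (fun s => if s.degree + d = n then
      (big d (s + Finsupp.single a d + Finsupp.single b d) : ℂ)⁻¹ else 0)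
    ((g a).divMonomial (Finsupp.single b d) - (g b).divMonomial (Finsupp.single a d))

lemma coeff_kos (d n : ℕ) (g : Fin N → MvPolynomial (Fin N) ℂ) (a b : Fin N) (s : Fin N →₀ ℕ) :
    coeff s (kos d n g a b) = if s.degree + d = n then
      (big d (s + Finsupp.single a d + Finsupp.single b d) : ℂ)⁻¹ *
        (coeff (Finsupp.single b d + s) (g a) - coeff (Finsupp.single a d + s) (g b)) else 0 := by
  unfold kos
  rw [coeff_wt, coeff_sub, coeff_divMonomial, coeff_divMonomial]
  split_ifs <;> simp

lemma kos_antisymm (d n : ℕ) (g : Fin N → MvPolynomial (Fin N) ℂ) (a b : Fin N) :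
    kos d n g b a = - kos d n g a b := by
  ext s
  rw [coeff_neg, coeff_kos, coeff_kos, add_right_comm]
  split_ifs
  · ring
  · simp

lemma kos_self (d n : ℕ) (g : Fin N → MvPolynomial (Fin N) ℂ) (a : Fin N) :
    kos d n g a a = 0 := by
  ext s
  rw [coeff_kos]
  simp

lemma rename_kos (d n : ℕ) {g : Fin N → MvPolynomial (Fin N) ℂ} (hg : Equi g)
    (σ : Equiv.Perm (Fin N)) (a b : Fin N) :
    rename σ (kos d n g a b) = kos d n g (σ a) (σ b) := by
  ext t
  obtain ⟨s, rfl⟩ : ∃ s : Fin N →₀ ℕ, s.mapDomain σ = t :=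
    ⟨t.mapDomain σ.symm, by rw [← Finsupp.mapDomain_comp]; simp⟩
  have hs : ∀ i, Finsupp.single (σ i) d = (Finsupp.single i d).mapDomain σ := fun i => by
    rw [Finsupp.mapDomain_single]
  rw [coeff_rename_mapDomain _ σ.injective, coeff_kos, coeff_kos, Finsupp.degree_mapDomain,
    hs a, hs b, ← Finsupp.mapDomain_add, ← Finsupp.mapDomain_add, ← Finsupp.mapDomain_add,
    ← Finsupp.mapDomain_add, big_mapDomain, ← hg σ a, ← hg σ b,
    coeff_rename_mapDomain _ σ.injective, coeff_rename_mapDomain _ σ.injective]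

lemma Bd_kos (d n : ℕ) (g : Fin N → MvPolynomial (Fin N) ℂ) (a b : Fin N) :
    Bd d n (kos d n g a b) := by
  intro s hs
  rw [coeff_kos] at hs
  split_ifs at hs with h
  · exact h.le
  · exact absurd rfl hs

/-- Each row of the homotopy satisfies the divisibility condition of `exists_Dv`. In the generic
case this is equivariance; for the entries `kos b c` themselves it is their antisymmetry. -/
lemma kos_dvd (d n : ℕ) {g : Fin N → MvPolynomial (Fin N) ℂ} (hg : Equi g) (D : Polynomial ℂ)
    (a b c : Fin N) (hbc : b ≠ c) : (X b - X c : MvPolynomial (Fin N) ℂ) ∣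
      Polynomial.aeval (X b) D * kos d n g a b - Polynomial.aeval (X c) D * kos d n g a c := by
  have key : ∀ i j : Fin N, (X i - X j : MvPolynomial (Fin N) ℂ) ∣ kos d n g i j := by
    intro i j
    have := ell_dvd_sub_rename i j (kos d n g i j)
    rw [rename_kos d n hg, Equiv.swap_apply_left, Equiv.swap_apply_right, kos_antisymm d n g i j,
      sub_neg_eq_add, ← two_mul] at this
    have h2 : kos d n g i j = C (1 / 2 : ℂ) * (2 * kos d n g i j) := by
      rw [← mul_assoc, show (2 : MvPolynomial (Fin N) ℂ) = C 2 from rfl, ← C_mul]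
      norm_num
    rw [h2]
    exact this.mul_left _
  by_cases h1 : a = b
  · subst h1
    rw [kos_self, mul_zero, zero_sub]
    exact ((key a c).mul_left _).neg_right
  by_cases h2 : a = c
  · subst h2
    rw [kos_self, mul_zero, sub_zero, ← neg_sub, neg_dvd]
    exact (key a b).mul_left _
  have := ell_dvd_sub_rename b c (Polynomial.aeval (X b) D * kos d n g a b)
  rwa [map_mul, rename_aeval, rename_kos d n hg, Equiv.swap_apply_left,
    Equiv.swap_apply_of_ne_of_ne h1 h2] at this

lemma coeff_X_pow_mul_ite (b : Fin N) (d : ℕ) (p : MvPolynomial (Fin N) ℂ) (u : Fin N →₀ ℕ) :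
    coeff u (X b ^ d * p) = if d ≤ u b then coeff (u - Finsupp.single b d) p else 0 := by
  rw [X_pow_eq_monomial, coeff_monomial_mul', one_mul]
  simp only [Finsupp.single_le_iff]

/-- If `g` has degree at most `n` and its degree `n` part satisfies the cycle condition
`∑ x_b^d g_b = 0`, then this part is the boundary of `kos d n g`. -/
lemma kos_boundary (d n : ℕ) (g : Fin N → MvPolynomial (Fin N) ℂ)
    (hg : ∀ a, Bd 1 (n + 1) (g a))
    (hcyc : ∀ u : Fin N →₀ ℕ, u.degree = n + d → (∃ i, d ≤ u i) →
      coeff u (∑ b, X b ^ d * g b) = 0) (a : Fin N) :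
    Bd 1 n (g a - ∑ b, X b ^ d * kos d n g a b) := by
  intro t ht
  have hdeg : ∀ b, d ≤ t b → (t - Finsupp.single b d).degree + d = t.degree := by
    intro b hb
    conv_rhs => rw [← tsub_add_cancel_of_le (Finsupp.single_le_iff.2 hb)]
    rw [map_add, Finsupp.degree_single]
  have e : coeff t (∑ b, X b ^ d * kos d n g a b) = ∑ b, if d ≤ t b then
      coeff (t - Finsupp.single b d) (kos d n g a b) else 0 := by
    simp only [coeff_sum, coeff_X_pow_mul_ite]
  by_cases hn : t.degree = n
  · exfalso
    refine ht ?_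
    rw [coeff_sub, e, sub_eq_zero]
    set u := t + Finsupp.single a d with hu
    have hub : ∀ b, b ≠ a → u b = t b := by
      intro b hb; simp [hu, Finsupp.single_eq_of_ne hb]
    have hua : d ≤ u a := by simp [hu]
    -- every summand has the common value obtained from the monomial `u = t + d e_a`
    have e2 : ∀ b, (if d ≤ t b then coeff (t - Finsupp.single b d) (kos d n g a b) else 0)
        = if d ≤ u b then (big d u : ℂ)⁻¹ *
          (coeff t (g a) - coeff (u - Finsupp.single b d) (g b)) else 0 := by
      intro b
      by_cases hba : b = a
      · subst hba
        rw [kos_self, if_pos hua]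
        simp [hu]
      · rw [hub b hba]
        split_ifs with h
        · have h' := Finsupp.single_le_iff.2 h
          rw [coeff_kos, if_pos ((hdeg b h).trans hn), add_right_comm,
            tsub_add_cancel_of_le h', add_tsub_cancel_of_le h', hu,
            add_comm (Finsupp.single a d), tsub_add_eq_add_tsub h']
        · rfl
    simp_rw [e2]
    have hc := hcyc u (by rw [hu, map_add, hn, Finsupp.degree_single]) ⟨a, hua⟩
    simp only [coeff_sum, coeff_X_pow_mul_ite] at hc
    rw [← Finset.sum_filter] at hc ⊢
    rw [← Finset.mul_sum, Finset.sum_sub_distrib, hc, sub_zero, Finset.sum_const, nsmul_eq_mul,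
      ← mul_assoc]
    have : (big d u : ℂ) ≠ 0 := by
      refine Nat.cast_ne_zero.2 (Finset.card_ne_zero_of_mem (a := a) ?_)
      simpa using hua
    rw [show ((univ.filter fun i => d ≤ u i).card : ℂ) = big d u from rfl, inv_mul_cancel₀ this,
      one_mul]
  · have e0 : coeff t (∑ b, X b ^ d * kos d n g a b) = 0 := by
      rw [e]
      refine Finset.sum_eq_zero fun b _ => ?_
      split_ifs with h
      · rw [coeff_kos, if_neg (by rw [hdeg b h]; exact hn)]
      · rfl
    rw [coeff_sub, e0, sub_zero] at ht
    have := hg a t ht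
    omega

/-- If all exponents of `f` are less than `d` and `Phi f` is the twisted divergence of an
equivariant field, then `f = 0`. The top degree part of the field is a Koszul boundary. Replacing that
boundary by the twisted one, which has zero divergence, lowers the degree of the field. -/
lemma eq_zero_of_Dv (R D : Polynomial ℂ) (hdeg : D.natDegree < R.natDegree)
    (f : MvPolynomial (Fin N) ℂ)
    (hf : ∀ s : Fin N →₀ ℕ, (∃ i, R.natDegree ≤ s i) → coeff s f = 0) (n : ℕ) :
    ∀ g : Fin N → MvPolynomial (Fin N) ℂ, Equi g → (∀ a, Bd 1 n (g a)) →
      Phi N * f = Dv R D g → f = 0 := by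
  have hlc : R.leadingCoeff ≠ 0 := by
    rw [Ne, Polynomial.leadingCoeff_eq_zero]; rintro rfl; simp at hdeg
  induction n with
  | zero =>
    intro g _ hb h
    have : ∀ a, g a = 0 := by
      intro a
      ext s
      by_contra h
      have := hb a s h
      omega
    have e : Dv R D g = 0 := by simp [Dv, this]
    rw [e] at h
    exact (mul_eq_zero.1 h).resolve_left Phi_ne_zero
  | succ n ih =>
    intro g hg hb h
    set d := R.natDegree with hd
    obtain ⟨f', hf', hlow⟩ := exists_Dv R D hdeg (n + d) g (fun b c _ => hg.dvd D b c)
      (fun b s hs => by have := hb b s hs; omega)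
    obtain rfl : f' = f := mul_left_cancel₀ Phi_ne_zero (hf'.trans h.symm)
    -- a monomial with an exponent `≥ d` does not occur in `f`, so nothing can cancel it
    have hcyc : ∀ u : Fin N →₀ ℕ, u.degree = n + d → (∃ i, d ≤ u i) →
        coeff u (∑ b, X b ^ d * g b) = 0 := by
      intro u hu hi
      by_contra hne
      have := hlow u (by
        rw [coeff_sub, hf u hi, zero_sub, coeff_smul, smul_eq_mul]
        exact neg_ne_zero.2 (mul_ne_zero hlc hne))
      omega
    have hex := fun a => exists_Dv R D hdeg n (kos d n g a)
      (fun b c hbc => kos_dvd d n hg D a b c hbc) (fun b => Bd_kos d n g a b)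
    choose k hk hkb using hex
    refine ih (fun a => g a - R.leadingCoeff⁻¹ • k a) ?_ ?_ ?_
    · have hke : Equi k := by
        intro σ a
        refine mul_left_cancel₀ (Phi_ne_zero (N := N)) ?_
        rw [hk]
        conv_lhs => rw [← rename_Phi σ]
        rw [← map_mul, hk, Dv, map_sum, Dv,
          ← Equiv.sum_comp σ (fun b => nab R D b (Phi N * kos d n g (σ a) b))]
        refine Finset.sum_congr rfl fun b _ => ?_
        rw [rename_nab, map_mul, rename_Phi, rename_kos d n hg]
      intro σ a
      simp only [map_sub, map_smul, hg σ a, hke σ a]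
    · intro a
      have h1 := kos_boundary d n g hb hcyc a
      have h2 := h1.sub ((hkb a).smul R.leadingCoeff⁻¹)
      rw [smul_sub, smul_smul, inv_mul_cancel₀ hlc, one_smul] at h2
      convert h2 using 1
      ring
    · -- the double sum is symmetric in the operators and antisymmetric in `kos`
      have h0 : ∑ a, nab R D a (Phi N * k a) = 0 := by
        have e1 : ∑ a, nab R D a (Phi N * k a)
            = ∑ a, ∑ b, nab R D a (nab R D b (Phi N * kos d n g a b)) := by
          refine Finset.sum_congr rfl fun a _ => ?_
          rw [hk, Dv, map_sum]
        have e2 : ∑ a, ∑ b, nab R D a (nab R D b (Phi N * kos d n g a b))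
            = - ∑ a, ∑ b, nab R D a (nab R D b (Phi N * kos d n g a b)) := by
          conv_lhs => rw [Finset.sum_comm]
          rw [← Finset.sum_neg_distrib]
          refine Finset.sum_congr rfl fun a _ => ?_
          rw [← Finset.sum_neg_distrib]
          refine Finset.sum_congr rfl fun b _ => ?_
          rw [nab_comm, kos_antisymm, mul_neg, map_neg, map_neg]
        rw [e1]
        exact self_eq_neg.1 e2
      rw [h, Dv, Dv, ← sub_eq_zero, ← Finset.sum_sub_distrib, ← smul_zero (R.leadingCoeff⁻¹), ← h0,
        Finset.smul_sum]
      refine Finset.sum_congr rfl fun a _ => ?_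
      rw [mul_sub, map_sub, mul_smul_comm, map_smul, sub_sub_cancel]

/-! ### Loop equations as divergences -/

/-- The polynomial underlying `pProd`. -/
noncomputable def pP (N : ℕ) (μ : List ℕ) : MvPolynomial (Fin N) ℂ :=
  (μ.map (psum (Fin N) ℂ)).prod

lemma coe_pProd (μ : List ℕ) : (pProd N μ : MvPolynomial (Fin N) ℂ) = pP N μ := by
  induction μ with
  | nil => simp [pProd, pP]
  | cons k μ ih =>
    simp only [pProd, pP, List.map_cons, List.prod_cons, MulMemClass.coe_mul] at ih ⊢
    rw [ih]; rfl

lemma pP_cons (k : ℕ) (μ : List ℕ) : pP N (k :: μ) = psum (Fin N) ℂ k * pP N μ := by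
  simp [pP]

lemma rename_pP (σ : Equiv.Perm (Fin N)) (μ : List ℕ) : rename σ (pP N μ) = pP N μ := by
  induction μ with
  | nil => simp [pP]
  | cons k μ ih => rw [pP_cons, map_mul, ih, rename_psum]

lemma pderiv_psum (b : Fin N) (k : ℕ) :
    pderiv b (psum (Fin N) ℂ k) = (k : ℂ) • X b ^ (k - 1) := by
  simp only [psum, map_sum, pderiv_pow, pderiv_X, Pi.single_apply]
  simp [Algebra.smul_def]

lemma pderiv_pP (b : Fin N) (μ : List ℕ) :
    pderiv b (pP N μ) = ∑ i : Fin μ.length,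
      (μ.get i : ℂ) • (X b ^ (μ.get i - 1) * pP N (μ.eraseIdx i)) := by
  induction μ with
  | nil => simp [pP]
  | cons k μ ih =>
    rw [pP_cons, pderiv_mul, ih, pderiv_psum]
    simp only [List.length_cons, Fin.sum_univ_succ, List.get_cons_zero,
      Fin.val_zero, List.eraseIdx_cons_zero, Fin.val_succ, List.eraseIdx_cons_succ, pP_cons]
    rw [smul_mul_assoc, Finset.mul_sum]
    congr 1
    refine Finset.sum_congr rfl fun i _ => ?_
    rw [mul_smul_comm]
    simp only [List.get_eq_getElem, Fin.val_succ, List.getElem_cons_succ]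
    congr 1
    ring

/-- The divided difference of `D(x) x^m` at `x_b`, `x_c`. -/
noncomputable def dd (D : Polynomial ℂ) (m : ℕ) (b c : Fin N) : MvPolynomial (Fin N) ℂ :=
  ∑ k ∈ Finset.range (D.natDegree + 1), D.coeff k •
    ∑ j ∈ Finset.range (k + m), X b ^ j * X c ^ (k + m - 1 - j)

lemma aeval_mul_pow (D : Polynomial ℂ) (m : ℕ) (b : Fin N) :
    Polynomial.aeval (X b : MvPolynomial (Fin N) ℂ) D * X b ^ m =
      ∑ k ∈ Finset.range (D.natDegree + 1), D.coeff k • X b ^ (k + m) := by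
  rw [Polynomial.aeval_eq_sum_range, Finset.sum_mul]
  refine Finset.sum_congr rfl fun k _ => ?_
  rw [smul_mul_assoc, pow_add]

lemma ell_mul_dd (D : Polynomial ℂ) (m : ℕ) (b c : Fin N) :
    (X b - X c) * dd D m b c = Polynomial.aeval (X b : MvPolynomial (Fin N) ℂ) D * X b ^ m
      - Polynomial.aeval (X c : MvPolynomial (Fin N) ℂ) D * X c ^ m := by
  rw [aeval_mul_pow, aeval_mul_pow, dd, Finset.mul_sum, ← Finset.sum_sub_distrib]
  refine Finset.sum_congr rfl fun k _ => ?_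
  rw [mul_smul_comm, ← smul_sub, mul_comm, geom_sum₂_mul]

lemma dd_self (D : Polynomial ℂ) (m : ℕ) (b : Fin N) :
    dd D m b b = pderiv b (Polynomial.aeval (X b : MvPolynomial (Fin N) ℂ) D * X b ^ m) := by
  rw [aeval_mul_pow, dd, map_sum]
  refine Finset.sum_congr rfl fun k _ => ?_
  rw [Derivation.map_smul, pderiv_pow, pderiv_X_self, mul_one]
  congr 1
  rw [Finset.sum_congr rfl (g := fun _ => (X b : MvPolynomial (Fin N) ℂ) ^ (k + m - 1))]
  · simp
  · intro j hj
    rw [← pow_add]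
    congr 1
    have := Finset.mem_range.1 hj
    omega

lemma sum_dd (D : Polynomial ℂ) (m : ℕ) :
    ∑ p : Fin N × Fin N, dd D m p.1 p.2 = ∑ k ∈ Finset.range (D.natDegree + 1), D.coeff k •
      ∑ j ∈ Finset.range (k + m), psum (Fin N) ℂ j * psum (Fin N) ℂ (k + m - 1 - j) := by
  unfold dd
  rw [Finset.sum_comm]
  refine Finset.sum_congr rfl fun k _ => ?_
  rw [← Finset.smul_sum, Finset.sum_comm]
  congr 1
  refine Finset.sum_congr rfl fun j _ => ?_
  rw [Fintype.sum_prod_type, psum, psum, Finset.sum_mul_sum]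

/-- The loop-equation polynomial is the twisted divergence of the field `x_b^m p_μ`. -/
lemma Dv_Qrat (R D : Polynomial ℂ) (m : ℕ) (μ : List ℕ) :
    Phi N * (Qrat N R D m μ : MvPolynomial (Fin N) ℂ) =
      Dv R D (fun b => X b ^ m * pP N μ) := by
  rw [Dv_eq R D _ (fun b c => dd D m b c * pP N μ)]
  · congr 1
    have h1 : ∑ b, pderiv b (Polynomial.aeval (X b) D * (X b ^ m * pP N μ)) =
        ∑ b, dd D m b b * pP N μ + ∑ i : Fin μ.length, (μ.get i : ℂ) •
          (pRpoly N D (m + μ.get i - 1) * pP N (μ.eraseIdx i)) := by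
      simp_rw [pRpoly, Finset.sum_mul, Finset.smul_sum]
      rw [Finset.sum_comm, ← Finset.sum_add_distrib]
      refine Finset.sum_congr rfl fun b _ => ?_
      rw [← mul_assoc, pderiv_mul, ← dd_self, pderiv_pP, Finset.mul_sum]
      congr 1
      refine Finset.sum_congr rfl fun i _ => ?_
      rw [mul_smul_comm]
      rcases Nat.eq_zero_or_pos (μ.get i) with h0 | h0
      · rw [h0]; simp
      · congr 1
        rw [Nat.add_sub_assoc h0, pow_add]
        ring
    have h2 : ∑ b, dd D m b b * pP N μ
        + ∑ p ∈ (univ : Finset (Fin N)).offDiag, dd D m p.1 p.2 * pP N μ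
        = (∑ k ∈ Finset.range (D.natDegree + 1), D.coeff k •
      ∑ j ∈ Finset.range (k + m), psum (Fin N) ℂ j * psum (Fin N) ℂ (k + m - 1 - j)) * pP N μ := by
      rw [← sum_dd, Finset.sum_mul, ← Finset.univ_product_univ, ← Finset.diag_union_offDiag,
        Finset.sum_union (Finset.disjoint_diag_offDiag _), Finset.sum_diag]
    rw [h1]
    have h3 : (Qrat N R D m μ : MvPolynomial (Fin N) ℂ) = pRpoly N R m * pP N μ
        - (∑ k ∈ Finset.range (D.natDegree + 1), D.coeff k •
          ∑ j ∈ Finset.range (k + m), psum (Fin N) ℂ j * psum (Fin N) ℂ (k + m - 1 - j)) * pP N μ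
        - ∑ i : Fin μ.length, (μ.get i : ℂ) •
          (pRpoly N D (m + μ.get i - 1) * pP N (μ.eraseIdx i)) := by
      simp only [Qrat, AddSubgroupClass.coe_sub, MulMemClass.coe_mul, AddSubmonoidClass.coe_finsetSum,
        SetLike.val_smul, coe_pProd, pRS, pPow, Finset.sum_mul, smul_mul_assoc]
    rw [h3, ← h2, pRpoly, Finset.sum_mul]
    simp only [mul_assoc]
    ring
  · intro b c _
    rw [← mul_assoc, ell_mul_dd]
    ring

lemma equi_pow_mul {f : MvPolynomial (Fin N) ℂ} (hf : f.IsSymmetric) (m : ℕ) :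
    Equi (fun b => X b ^ m * f) := by
  intro σ a
  simp only [map_mul, map_pow, rename_X, hf σ]

lemma Dv_add (R D : Polynomial ℂ) (g g' : Fin N → MvPolynomial (Fin N) ℂ) :
    Dv R D (fun b => g b + g' b) = Dv R D g + Dv R D g' := by
  simp only [Dv, mul_add, map_add, Finset.sum_add_distrib]

lemma Dv_smul (R D : Polynomial ℂ) (c : ℂ) (g : Fin N → MvPolynomial (Fin N) ℂ) :
    Dv R D (fun b => c • g b) = c • Dv R D g := by
  simp only [Dv, mul_smul_comm, map_smul, Finset.smul_sum]

lemma exists_Equi_of_mem (R D : Polynomial ℂ) {x : SymPoly N} (hx : x ∈ Lrat N R D) :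
    ∃ g, Equi g ∧ Phi N * (x : MvPolynomial (Fin N) ℂ) = Dv R D g := by
  induction hx using Submodule.span_induction with
  | mem x hx =>
    obtain ⟨m, μ, rfl⟩ := hx
    exact ⟨_, equi_pow_mul (fun σ => rename_pP σ μ) m, Dv_Qrat R D m μ⟩
  | zero => exact ⟨fun _ => 0, fun σ a => by simp, by simp [Dv]⟩
  | add x y _ _ hx hy =>
    obtain ⟨g, hg, h⟩ := hx
    obtain ⟨g', hg', h'⟩ := hy
    refine ⟨fun b => g b + g' b, fun σ a => by rw [map_add, hg, hg'], ?_⟩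
    rw [Dv_add, ← h, ← h', AddMemClass.coe_add, mul_add]
  | smul c x _ hx =>
    obtain ⟨g, hg, h⟩ := hx
    refine ⟨fun b => c • g b, fun σ a => by rw [map_smul, hg], ?_⟩
    rw [Dv_smul, ← h, SetLike.val_smul, mul_smul_comm]

/-! ### Symmetrized monomials -/

/-- The symmetrization operator (not normalized). -/
noncomputable def symz (N : ℕ) : MvPolynomial (Fin N) ℂ →ₗ[ℂ] MvPolynomial (Fin N) ℂ :=
  ∑ σ : Equiv.Perm (Fin N), (rename σ).toLinearMap

lemma symz_apply (p : MvPolynomial (Fin N) ℂ) :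
    symz N p = ∑ σ : Equiv.Perm (Fin N), rename σ p := by
  simp [symz]

lemma symz_isSymmetric (p : MvPolynomial (Fin N) ℂ) : (symz N p).IsSymmetric := by
  intro τ
  rw [symz_apply, map_sum,
    ← Equiv.sum_comp (Equiv.mulLeft τ) (fun σ => rename (⇑σ) p)]
  refine Finset.sum_congr rfl fun σ _ => ?_
  rw [rename_rename]; rfl

lemma symz_rename (τ : Equiv.Perm (Fin N)) (p : MvPolynomial (Fin N) ℂ) :
    symz N (rename τ p) = symz N p := by
  rw [symz_apply, symz_apply, ← Equiv.sum_comp (Equiv.mulRight τ) (fun σ => rename (⇑σ) p)]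
  refine Finset.sum_congr rfl fun σ _ => ?_
  rw [rename_rename]; rfl

lemma psum_mul_symz (k : ℕ) (p : MvPolynomial (Fin N) ℂ) :
    psum (Fin N) ℂ k * symz N p = symz N (psum (Fin N) ℂ k * p) := by
  rw [symz_apply, symz_apply, Finset.mul_sum]
  refine Finset.sum_congr rfl fun σ _ => ?_
  rw [map_mul, rename_psum]

lemma symz_of_isSymmetric {f : MvPolynomial (Fin N) ℂ} (hf : f.IsSymmetric) :
    f = ((N.factorial : ℂ)⁻¹) • symz N f := by
  have : symz N f = (N.factorial : ℂ) • f := by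
    rw [symz_apply, Finset.sum_congr rfl fun σ _ => hf σ, Finset.sum_const, Finset.card_univ,
      Fintype.card_perm, Fintype.card_fin, Nat.cast_smul_eq_nsmul]
  rw [this, smul_smul, inv_mul_cancel₀ (Nat.cast_ne_zero.2 N.factorial_ne_zero), one_smul]

/-- The symmetrized monomial `∑_σ σ(x^u)`, the sum running over permutations and not over distinct
monomials. -/
noncomputable def orb (u : Fin N →₀ ℕ) : MvPolynomial (Fin N) ℂ := symz N (monomial u 1)

lemma mem_of_orb_mem {f : MvPolynomial (Fin N) ℂ} (hf : f.IsSymmetric)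
    (V : Submodule ℂ (MvPolynomial (Fin N) ℂ)) (h : ∀ s, coeff s f ≠ 0 → orb s ∈ V) : f ∈ V := by
  rw [symz_of_isSymmetric hf]
  refine V.smul_mem _ ?_
  rw [show symz N f = symz N (∑ s ∈ f.support, monomial s (coeff s f)) by
    rw [f.support_sum_monomial_coeff], map_sum]
  refine V.sum_mem fun s hs => ?_
  have : monomial s (coeff s f) = coeff s f • monomial s (1 : ℂ) := by
    rw [smul_monomial, smul_eq_mul, mul_one]
  rw [this, map_smul]
  exact V.smul_mem _ (h s (mem_support_iff.1 hs))

/-- If `V` contains `p_k * orb s` whenever `k ≥ d` and the degree is `n`, it contains every `orb u` of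
degree `n` with an exponent `≥ d`. The proof writes `u = s + k e_i` with `s_i = 0`. Multiplication by
`p_k` adds `k` to each exponent of `s` in turn: outside the support of `s` this always gives `orb u`,
while the remaining terms involve fewer variables. -/
lemma orb_mem (V : Submodule ℂ (MvPolynomial (Fin N) ℂ)) (d n : ℕ) (hd : 1 ≤ d)
    (h : ∀ k s, d ≤ k → s.degree + k = n → psum (Fin N) ℂ k * orb s ∈ V) (c : ℕ) :
    ∀ u : Fin N →₀ ℕ, u.support.card = c → u.degree = n → (∃ i, d ≤ u i) → orb u ∈ V := by
  induction c using Nat.strong_induction_on with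
  | _ c ih =>
    rintro u hc hn ⟨i, hi⟩
    set s := u.erase i with hs
    have hu : Finsupp.single i (u i) + s = u := Finsupp.single_add_erase i u
    have hsn : s.degree + u i = n := by
      rw [← hn, ← hu, map_add, Finsupp.degree_single, hu, add_comm]
    have hsi : i ∉ s.support := by simp [hs]
    have hui : i ∈ u.support := by
      rw [Finsupp.mem_support_iff]; omega
    have hV := h (u i) s hi hsn
    have e1 : psum (Fin N) ℂ (u i) * orb s = ∑ j, orb (Finsupp.single j (u i) + s) := by
      rw [orb, psum_mul_symz, psum, Finset.sum_mul, map_sum]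
      refine Finset.sum_congr rfl fun j _ => ?_
      rw [X_pow_eq_monomial, monomial_mul, one_mul, orb]
    have e2 : ∀ j ∈ univ \ s.support, orb (Finsupp.single j (u i) + s) = orb u := by
      intro j hj
      have hj' : j ∉ s.support := (Finset.mem_sdiff.1 hj).2
      rw [orb, ← symz_rename (Equiv.swap i j), rename_monomial, orb]
      suffices he : (Finsupp.single j (u i) + s).mapDomain (Equiv.swap i j) = u by rw [he]
      conv_rhs => rw [← hu]
      rw [Finsupp.mapDomain_add, Finsupp.mapDomain_single, Equiv.swap_apply_right]
      ext l
      rw [Finsupp.add_apply, Finsupp.add_apply]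
      congr 1
      have : s.mapDomain (Equiv.swap i j) (Equiv.swap i j (Equiv.swap i j l))
        = s (Equiv.swap i j l) := Finsupp.mapDomain_apply (Equiv.swap i j).injective _ _
      rw [Equiv.swap_apply_self] at this
      rw [this]
      by_cases h1 : l = i
      · subst h1
        rw [Equiv.swap_apply_left, Finsupp.notMem_support_iff.1 hj',
          Finsupp.notMem_support_iff.1 hsi]
      by_cases h2 : l = j
      · subst h2
        rw [Equiv.swap_apply_right, Finsupp.notMem_support_iff.1 hj',
          Finsupp.notMem_support_iff.1 hsi]
      rw [Equiv.swap_apply_of_ne_of_ne h1 h2]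
    have e3 : ∑ j ∈ s.support, orb (Finsupp.single j (u i) + s) ∈ V := by
      refine V.sum_mem fun j hj => ?_
      have hsup : (Finsupp.single j (u i) + s).support = s.support := by
        ext l
        have := Finsupp.mem_support_iff.1 hj
        by_cases hl : l = j
        · subst hl; simp [this]
        · simp [Finsupp.single_eq_of_ne hl]
      refine ih _ ?_ _ rfl ?_ ⟨j, ?_⟩
      · rw [hsup, ← hc, hs, Finsupp.support_erase]
        exact Finset.card_erase_lt_of_mem hui
      · rw [map_add, Finsupp.degree_single, add_comm, hsn]
      · simp only [Finsupp.add_apply, Finsupp.single_eq_same]; omega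
    rw [e1, ← Finset.sum_sdiff (Finset.subset_univ s.support), Finset.sum_congr rfl e2,
      Finset.sum_const] at hV
    have h4 := (Submodule.add_mem_iff_left V e3).1 hV
    have h5 : ((univ \ s.support).card : ℂ) ≠ 0 :=
      Nat.cast_ne_zero.2 (Finset.card_ne_zero_of_mem (a := i) (by simp [hs]))
    rw [← Nat.cast_smul_eq_nsmul ℂ] at h4
    exact (V.smul_mem_iff h5).1 h4

/-- Power sum products span the symmetric polynomials. -/
lemma mem_span_pP {f : MvPolynomial (Fin N) ℂ} (hf : f.IsSymmetric) :
    f ∈ Submodule.span ℂ (Set.range (pP N)) := by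
  refine mem_of_orb_mem hf _ fun s _ => ?_
  suffices H : ∀ n, ∀ u : Fin N →₀ ℕ, u.degree = n →
    orb u ∈ Submodule.span ℂ (Set.range (pP N)) from H _ s rfl
  intro n
  induction n using Nat.strong_induction_on with
  | _ n ih =>
    intro u hu
    by_cases h0 : u = 0
    · subst h0
      have : orb (0 : Fin N →₀ ℕ) = (N.factorial : ℂ) • pP N [] := by
        rw [orb, symz_apply]
        simp [pP, Fintype.card_perm, Algebra.smul_def]
      rw [this]
      exact Submodule.smul_mem _ _ (Submodule.subset_span ⟨_, rfl⟩)
    · refine orb_mem _ 1 n le_rfl (fun k s hk hs => ?_) _ u rfl hu ?_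
      · have h1 := ih s.degree (by omega) s rfl
        generalize orb s = q at h1
        induction h1 using Submodule.span_induction with
        | mem x hx =>
          obtain ⟨μ, rfl⟩ := hx
          exact Submodule.subset_span ⟨k :: μ, pP_cons k μ⟩
        | zero => simp
        | add x y _ _ hx hy => rw [mul_add]; exact Submodule.add_mem _ hx hy
        | smul c x _ hx => rw [mul_smul_comm]; exact Submodule.smul_mem _ _ hx
      · obtain ⟨i, hi⟩ := Finsupp.ne_iff.1 h0
        exact ⟨i, Nat.one_le_iff_ne_zero.2 hi⟩

/-! ### The sum of the two subspaces -/

/-- The space of polynomials underlying the elements of `Lrat`. -/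
noncomputable def LS (N : ℕ) (R D : Polynomial ℂ) : Submodule ℂ (MvPolynomial (Fin N) ℂ) :=
  (Lrat N R D).map (symmetricSubalgebra (Fin N) ℂ).val.toLinearMap

lemma LS_isSymmetric {R D : Polynomial ℂ} {f : MvPolynomial (Fin N) ℂ} (hf : f ∈ LS N R D) :
    f.IsSymmetric := by
  obtain ⟨x, _, rfl⟩ := hf
  exact (mem_symmetricSubalgebra _).1 x.2

lemma exists_mem_LS (R D : Polynomial ℂ) (m : ℕ) {f : MvPolynomial (Fin N) ℂ}
    (hf : f ∈ Submodule.span ℂ (Set.range (pP N))) :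
    ∃ K ∈ LS N R D, Phi N * K = Dv R D (fun b => X b ^ m * f) := by
  induction hf using Submodule.span_induction with
  | mem x hx =>
    obtain ⟨μ, rfl⟩ := hx
    exact ⟨_, ⟨_, Submodule.subset_span ⟨m, μ, rfl⟩, rfl⟩, Dv_Qrat R D m μ⟩
  | zero => exact ⟨0, Submodule.zero_mem _, by simp [Dv]⟩
  | add x y _ _ hx hy =>
    obtain ⟨K, hK, h⟩ := hx
    obtain ⟨K', hK', h'⟩ := hy
    refine ⟨K + K', Submodule.add_mem _ hK hK', ?_⟩
    simp only [mul_add, h, h', Dv_add]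
  | smul c x _ hx =>
    obtain ⟨K, hK, h⟩ := hx
    refine ⟨c • K, Submodule.smul_mem _ _ hK, ?_⟩
    simp only [mul_smul_comm, h, Dv_smul]

/-- The symmetric polynomials all of whose exponents are less than `d`. -/
def Csub (N d : ℕ) : Submodule ℂ (MvPolynomial (Fin N) ℂ) where
  carrier := {f | f.IsSymmetric ∧ ∀ s : Fin N →₀ ℕ, (∃ i, d ≤ s i) → coeff s f = 0}
  add_mem' hf hg := ⟨hf.1.add hg.1, fun s hs => by rw [coeff_add, hf.2 s hs, hg.2 s hs, add_zero]⟩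
  zero_mem' := ⟨IsSymmetric.zero, fun s _ => coeff_zero s⟩
  smul_mem' c f hf := ⟨hf.1.smul c, fun s hs => by rw [coeff_smul, hf.2 s hs, smul_zero]⟩

lemma orb_mem_Csub {d : ℕ} {u : Fin N →₀ ℕ} (h : ∀ i, u i < d) : orb u ∈ Csub N d := by
  refine ⟨symz_isSymmetric _, ?_⟩
  rintro s ⟨i, hi⟩
  rw [orb, symz_apply, coeff_sum]
  refine Finset.sum_eq_zero fun σ _ => ?_
  rw [rename_monomial, coeff_monomial, if_neg]
  rintro rfl
  have : u.mapDomain σ (σ (σ.symm i)) = u (σ.symm i) := Finsupp.mapDomain_apply σ.injective _ _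
  rw [Equiv.apply_symm_apply] at this
  rw [this] at hi
  exact absurd (h (σ.symm i)) hi.not_gt

lemma Bd_orb (s : Fin N →₀ ℕ) : Bd 0 s.degree (orb s) := by
  rw [orb, symz_apply]
  refine Bd.sum _ fun σ _ t ht => ?_
  rw [rename_monomial, coeff_monomial] at ht
  split_ifs at ht with h
  · rw [← h, Finsupp.degree_mapDomain]; rfl
  · exact absurd rfl ht

/-- The sum of the two subspaces contains all symmetrized monomials. A loop equation has leading part
`R_d p_{d+m} p_μ`, and modulo such products `orb_mem` reduces every symmetrized monomial to ones with
exponents less than `d`. -/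
lemma orb_mem_sup (R D : Polynomial ℂ) (hdeg : D.natDegree < R.natDegree) (n : ℕ) :
    ∀ u : Fin N →₀ ℕ, u.degree = n → orb u ∈ LS N R D ⊔ Csub N R.natDegree := by
  have hlc : R.leadingCoeff ≠ 0 := by
    rw [Ne, Polynomial.leadingCoeff_eq_zero]; rintro rfl; simp at hdeg
  induction n using Nat.strong_induction_on with
  | _ n ih =>
    intro u hu
    by_cases h : ∃ i, R.natDegree ≤ u i
    · refine orb_mem _ R.natDegree n (by omega) (fun k s hk hs => ?_) _ u rfl hu h
      obtain ⟨m, rfl⟩ := Nat.exists_eq_add_of_le hk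
      have hsym : (orb s).IsSymmetric := symz_isSymmetric _
      obtain ⟨K', hK', hb⟩ := exists_Dv R D hdeg n (fun b => X b ^ m * orb s)
        (fun b c _ => (equi_pow_mul hsym m).dvd D b c) (fun b t ht => by
          have := ((Bd.X_pow (r := 0) (n := m) b m (by omega)).mul (Bd_orb s)) t ht
          omega)
      obtain ⟨K, hK, hKD⟩ := exists_mem_LS R D m (mem_span_pP hsym)
      obtain rfl : K' = K := mul_left_cancel₀ Phi_ne_zero (hK'.trans hKD.symm)
      have e : ∑ b : Fin N, X b ^ R.natDegree * (X b ^ m * orb s)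
          = psum (Fin N) ℂ (R.natDegree + m) * orb s := by
        rw [psum, Finset.sum_mul]
        refine Finset.sum_congr rfl fun b _ => ?_
        rw [pow_add, mul_assoc]
      rw [e] at hb
      set P := psum (Fin N) ℂ (R.natDegree + m) * orb s with hP
      have hPs : P.IsSymmetric := (psum_isSymmetric _ _ _).mul hsym
      have hr : K' - R.leadingCoeff • P ∈ LS N R D ⊔ Csub N R.natDegree := by
        refine mem_of_orb_mem ((LS_isSymmetric hK).sub (hPs.smul _)) _ fun t ht => ?_
        exact ih _ (Nat.lt_of_succ_le (hb t ht)) t rfl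
      have h2 := Submodule.sub_mem _ (Submodule.mem_sup_left hK) hr
      rw [sub_sub_cancel] at h2
      exact (Submodule.smul_mem_iff _ hlc).1 h2
    · push Not at h
      exact Submodule.mem_sup_right (orb_mem_Csub h)

/-! ### The dimension of the complement -/

/-- The monomial exponent attached to a tuple of numbers less than `d`. -/
noncomputable def expo {d : ℕ} (s : Fin N → Fin d) : Fin N →₀ ℕ :=
  Finsupp.equivFunOnFinite.symm fun i => (s i : ℕ)

lemma expo_injective {d : ℕ} : Function.Injective (expo : (Fin N → Fin d) → Fin N →₀ ℕ) := by
  intro s t h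
  funext i
  exact Fin.ext (DFunLike.congr_fun h i)

lemma mapDomain_expo {d : ℕ} (σ : Equiv.Perm (Fin N)) (s : Fin N → Fin d) :
    (expo s).mapDomain σ = expo (s ∘ σ.symm) := by
  ext i
  have : (expo s).mapDomain σ (σ (σ.symm i)) = expo s (σ.symm i) :=
    Finsupp.mapDomain_apply σ.injective _ _
  rwa [Equiv.apply_symm_apply] at this

/-- The multiset of values of a tuple. -/
def vals {d : ℕ} (s : Fin N → Fin d) : Sym (Fin d) N :=
  ⟨(univ : Finset (Fin N)).val.map s, by simp⟩

lemma vals_comp {d : ℕ} (s : Fin N → Fin d) (σ : Equiv.Perm (Fin N)) :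
    vals (s ∘ σ) = vals s := by
  refine Subtype.ext ?_
  change (univ : Finset (Fin N)).val.map (s ∘ σ) = (univ : Finset (Fin N)).val.map s
  rw [← Multiset.map_map, Multiset.map_univ_val_equiv]

lemma vals_surjective {d : ℕ} : Function.Surjective (vals : (Fin N → Fin d) → Sym (Fin d) N) := by
  rintro ⟨q, hq⟩
  induction q using Quotient.inductionOn with
  | _ l =>
    have hl : l.length = N := hq
    subst hl
    refine ⟨l.get, Subtype.ext ?_⟩
    change (univ : Finset (Fin l.length)).val.map l.get = (l : Multiset (Fin d))
    rw [Fin.univ_val_map, List.ofFn_get]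

lemma exists_perm_of_vals_eq {d : ℕ} {s t : Fin N → Fin d} (h : vals s = vals t) :
    ∃ σ : Equiv.Perm (Fin N), t = s ∘ σ := by
  have h1 : vals (s ∘ Tuple.sort s) = vals (t ∘ Tuple.sort t) := by rw [vals_comp, vals_comp, h]
  have h2 : (List.ofFn (s ∘ Tuple.sort s)).Perm (List.ofFn (t ∘ Tuple.sort t)) := by
    have := congrArg Subtype.val h1
    change (univ : Finset (Fin N)).val.map _ = (univ : Finset (Fin N)).val.map _ at this
    rw [Fin.univ_val_map, Fin.univ_val_map] at this
    exact Multiset.coe_eq_coe.1 this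
  have h3 : s ∘ Tuple.sort s = t ∘ Tuple.sort t :=
    List.ofFn_injective (h2.eq_of_sortedLE (Tuple.monotone_sort s).sortedLE_ofFn
      (Tuple.monotone_sort t).sortedLE_ofFn)
  refine ⟨(Tuple.sort t).symm.trans (Tuple.sort s), ?_⟩
  funext i
  have := congrFun h3 ((Tuple.sort t).symm i)
  simp only [Function.comp_apply, Equiv.apply_symm_apply] at this
  exact this.symm

/-- The symmetric polynomial with prescribed coefficients on the multisets of exponents. -/
noncomputable def ofVals (N d : ℕ) : (Sym (Fin d) N → ℂ) →ₗ[ℂ] MvPolynomial (Fin N) ℂ where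
  toFun c := ∑ s : Fin N → Fin d, monomial (expo s) (c (vals s))
  map_add' c c' := by simp only [Pi.add_apply, map_add, Finset.sum_add_distrib]
  map_smul' a c := by
    simp only [Pi.smul_apply, RingHom.id_apply, Finset.smul_sum, smul_monomial]

lemma ofVals_apply (d : ℕ) (c : Sym (Fin d) N → ℂ) :
    ofVals N d c = ∑ s : Fin N → Fin d, monomial (expo s) (c (vals s)) := rfl

lemma coeff_ofVals {d : ℕ} (c : Sym (Fin d) N → ℂ) (t : Fin N → Fin d) :
    coeff (expo t) (ofVals N d c) = c (vals t) := by
  simp only [ofVals_apply, coeff_sum, coeff_monomial, expo_injective.eq_iff]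
  simp

lemma ofVals_mem {d : ℕ} (c : Sym (Fin d) N → ℂ) : ofVals N d c ∈ Csub N d := by
  refine ⟨fun σ => ?_, ?_⟩
  · rw [ofVals_apply, map_sum, ← Equiv.sum_comp (σ.symm.arrowCongr (Equiv.refl (Fin d)))]
    refine Finset.sum_congr rfl fun s _ => ?_
    have e : σ.symm.arrowCongr (Equiv.refl (Fin d)) s = s ∘ σ := rfl
    rw [rename_monomial, mapDomain_expo, e, vals_comp]
    rw [Function.comp_assoc, Equiv.self_comp_symm, Function.comp_id]
  · rintro u ⟨i, hi⟩
    rw [ofVals_apply, coeff_sum]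
    refine Finset.sum_eq_zero fun s _ => ?_
    rw [coeff_monomial, if_neg]
    rintro rfl
    exact absurd (s i).2 hi.not_gt

lemma range_ofVals (d : ℕ) : LinearMap.range (ofVals N d) = Csub N d := by
  refine le_antisymm ?_ fun f hf => ?_
  · rintro _ ⟨c, rfl⟩
    exact ofVals_mem c
  choose rep hrep using vals_surjective (N := N) (d := d)
  refine ⟨fun q => coeff (expo (rep q)) f, ?_⟩
  ext u
  by_cases hu : ∃ i, d ≤ u i
  · rw [hf.2 u hu, (ofVals_mem _).2 u hu]
  · push Not at hu
    obtain ⟨t, rfl⟩ : ∃ t : Fin N → Fin d, expo t = u :=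
      ⟨fun i => ⟨u i, hu i⟩, by ext i; rfl⟩
    rw [coeff_ofVals]
    obtain ⟨σ, hσ⟩ := exists_perm_of_vals_eq (hrep (vals t)).symm
    have := coeff_rename_mapDomain σ.symm σ.symm.injective f (expo t)
    rwa [hf.1 σ.symm, mapDomain_expo, Equiv.symm_symm, ← hσ] at this

lemma ofVals_injective (d : ℕ) : Function.Injective (ofVals N d) := by
  intro c c' h
  funext q
  obtain ⟨s, rfl⟩ := vals_surjective q
  rw [← coeff_ofVals c, h, coeff_ofVals]

/-- An element of `Csub` is determined by its coefficients on the multisets of `N` exponents less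
than `d`, and these are arbitrary. -/
noncomputable def CsubEquiv (N d : ℕ) : (Sym (Fin d) N → ℂ) ≃ₗ[ℂ] Csub N d :=
  (LinearEquiv.ofInjective _ (ofVals_injective d)).trans (LinearEquiv.ofEq _ _ (range_ofVals d))

/-! ### The complement of the loop equations -/

/-- The symmetric polynomials all of whose exponents are less than `d`, inside `SymPoly N`. -/
noncomputable def Csym (N d : ℕ) : Submodule ℂ (SymPoly N) :=
  (Csub N d).comap (symmetricSubalgebra (Fin N) ℂ).val.toLinearMap

lemma isCompl_Csym (R D : Polynomial ℂ) (hdeg : D.natDegree < R.natDegree) :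
    IsCompl (Lrat N R D) (Csym N R.natDegree) := by
  refine ⟨Submodule.disjoint_def.2 fun x hx hx' => ?_,
    codisjoint_iff.2 (eq_top_iff.2 fun x _ => ?_)⟩
  · obtain ⟨g, hg, h⟩ := exists_Equi_of_mem R D hx
    refine Subtype.ext (eq_zero_of_Dv R D hdeg _ hx'.2
      (univ.sup (fun a => (g a).totalDegree) + 1) g hg (fun a => Bd.of_totalDegree ?_) h)
    have := Finset.le_sup (f := fun a => (g a).totalDegree) (Finset.mem_univ a)
    exact Nat.add_le_add_right this 1
  · have h : (x : MvPolynomial (Fin N) ℂ) ∈ LS N R D ⊔ Csub N R.natDegree :=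
      mem_of_orb_mem ((mem_symmetricSubalgebra _).1 x.2) _
        fun s _ => orb_mem_sup R D hdeg _ s rfl
    obtain ⟨_, ⟨y, hy, rfl⟩, z, hz, e⟩ := Submodule.mem_sup.1 h
    refine Submodule.mem_sup.2 ⟨y, hy, ⟨z, (mem_symmetricSubalgebra _).2 hz.1⟩, hz, Subtype.ext e⟩

/-- `Csym` and `Csub` agree, since the elements of `Csub` are symmetric. -/
noncomputable def CsymEquiv (N d : ℕ) : Csym N d ≃ₗ[ℂ] Csub N d :=
  LinearEquiv.ofBijective
    ((symmetricSubalgebra (Fin N) ℂ).val.toLinearMap.restrict (p := Csym N d) (q := Csub N d)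
      fun _ hx => hx)
    ⟨fun _ _ h => Subtype.ext (Subtype.ext
      (congrArg (fun z : Csub N d => (z : MvPolynomial (Fin N) ℂ)) h)),
      fun z => ⟨⟨⟨z, (mem_symmetricSubalgebra _).2 z.2.1⟩, z.2⟩, rfl⟩⟩

end LoopEq

theorem stmt15 (N : ℕ) (hN : 1 ≤ N) (R D : Polynomial ℂ)
    (hD : D.Monic) (hdeg : D.natDegree < R.natDegree) (hcop : IsCoprime R D) :
    Module.rank ℂ ((Lrat N R D).dualAnnihilator)
      = (N + R.natDegree - 1).choose N := by
  have e : (Sym (Fin R.natDegree) N → ℂ) ≃ₗ[ℂ] (SymPoly N ⧸ Lrat N R D) :=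
    ((LoopEq.CsubEquiv N R.natDegree).trans (LoopEq.CsymEquiv N R.natDegree).symm).trans
      (Submodule.quotientEquivOfIsCompl _ _ (LoopEq.isCompl_Csym R D hdeg)).symm
  have : Module.Finite ℂ (SymPoly N ⧸ Lrat N R D) := Module.Finite.equiv e
  have : Module.Finite ℂ (Lrat N R D).dualAnnihilator :=
    Module.Finite.equiv (Lrat N R D).dualQuotEquivDualAnnihilator
  rw [← Module.finrank_eq_rank, ← (Lrat N R D).dualQuotEquivDualAnnihilator.finrank_eq,
    Subspace.dual_finrank_eq, ← e.finrank_eq, Module.finrank_fintype_fun_eq_card,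
    Sym.card_sym_eq_choose, Fintype.card_fin, Nat.add_comm R.natDegree N]
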